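/- Fix ε ∈ ℂ∖{0}, t ∈ ℂ∖{0}, H ∈ ℂ, r ∈ ℂ, and q, p ∈ ℂ with q ≠ 0 and p²q² = tq + H + q⁻¹. Let A(x) be the matrix with entries A₁₁(x) = (r + pq/ε)/x, A₁₂(x) = (x − q)/(εx²), A₂₁(x) = (tx − q⁻¹)/(εx), A₂₂(x) = −A₁₁(x). Then for every x ∈ ℂ with x ≠ 0 and x ≠ q one has −det A(x) + A₁₁′(x) − A₁₁(x)·A₁₂′(x)/A₁₂(x) + (3/4)·(A₁₂′(x)/A₁₂(x))² − A₁₂″(x)/(2A₁₂(x)) = ε⁻²Q₀(x) + ε⁻¹Q₁(x) + Q₂(x), where Q₀(x) = t/x + H/x² + 1/x³, Q₁(x) = −pq²/(x²(x − q)) + 2pqr/x², and Q₂(x) = 3/(4(x − q)²) − (x + rq)/(x²(x − q)) + r²/x². -/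

import Mathlib

/-!
Only the logarithmic derivative `L = A₁₂' / A₁₂` of the upper right entry enters the oper potential:
since `A₁₂'' / A₁₂ = L² + L'`, the potential is `-det A + (A₁₁' - A₁₁ L) + (L² / 4 - L' / 2)`.
For the Painlevé III₃ connection `L = 1 / (x - q) - 2 / x`, so the last two groups produce exactly
the terms singular at `x = q`. The determinant is regular there, and the spectral constraint
eliminates `p²q²` from it in favour of `H`.
-/

open Filter Topology

variable {𝕜 : Type*} [NontriviallyNormedField 𝕜]

section LogDeriv

theorem deriv_deriv_div_self_eq_logDeriv_sq_add {f : 𝕜 → 𝕜} {x : 𝕜}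
    (hf : DifferentiableAt 𝕜 f x) (hfx : f x ≠ 0) (hL : DifferentiableAt 𝕜 (logDeriv f) x) :
    deriv (deriv f) x / f x = logDeriv f x ^ 2 + deriv (logDeriv f) x := by
  have deriv_eq : deriv f =ᶠ[𝓝 x] f * logDeriv f := by
    filter_upwards [hf.continuousAt.eventually_ne hfx] with y hy
    rw [Pi.mul_apply, logDeriv_apply, mul_div_cancel₀ _ hy]
  rw [deriv_eq.deriv_eq, deriv_mul hf hL, add_div, mul_div_cancel_left₀ _ hfx,
    mul_div_right_comm, ← logDeriv_apply, sq]

variable {c q x : 𝕜}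

theorem logDeriv_sub_const_div_const_mul_pow (n : ℕ) (hc : c ≠ 0) (hx : x ≠ 0) (hxq : x ≠ q) :
    logDeriv (fun y => (y - q) / (c * y ^ n)) x = 1 / (x - q) - n / x := by
  have hden : c * x ^ n ≠ 0 := mul_ne_zero hc (pow_ne_zero n hx)
  rw [logDeriv_div (f := fun y => y - q) x (sub_ne_zero.mpr hxq) hden (by fun_prop) (by fun_prop),
    logDeriv_const_mul x c hc, logDeriv_pow, logDeriv_apply, deriv_sub_const, deriv_id'']

theorem hasDerivAt_logDeriv_sub_const_div_const_mul_pow (n : ℕ)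
    (hc : c ≠ 0) (hx : x ≠ 0) (hxq : x ≠ q) :
    HasDerivAt (logDeriv fun y => (y - q) / (c * y ^ n)) (n / x ^ 2 - 1 / (x - q) ^ 2) x := by
  have logDeriv_eq : (logDeriv fun y => (y - q) / (c * y ^ n)) =ᶠ[𝓝 x]
      fun y => (y - q)⁻¹ - n * y⁻¹ := by
    filter_upwards [eventually_ne_nhds hx, eventually_ne_nhds hxq] with y hy hyq
    rw [logDeriv_sub_const_div_const_mul_pow n hc hy hyq, one_div, div_eq_mul_inv]
  have hasDerivAt_inv_sub := ((hasDerivAt_id x).sub_const q).inv (sub_ne_zero.mpr hxq)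
  refine (hasDerivAt_inv_sub.sub ((hasDerivAt_inv hx).const_mul (n : 𝕜))).congr_of_eventuallyEq
    logDeriv_eq |>.congr_deriv ?_
  simp only [id_eq]
  ring

end LogDeriv

section OperPotential

/-- The potential `Q` of the oper `d - [[0, 1], [Q, 0]] dx` gauge equivalent to `d - A dx`, for `A`
trace-free: if `ψ' = A ψ`, then `y = ψ₁ / √A₁₂` satisfies `y'' = Q y`. It is meaningful only
where `A₁₂ ≠ 0`. -/
noncomputable def operPotential (A : 𝕜 → Matrix (Fin 2) (Fin 2) 𝕜) (x : 𝕜) : 𝕜 :=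
  -(A x).det + deriv (fun y => A y 0 0) x
    - A x 0 0 * deriv (fun y => A y 0 1) x / A x 0 1
    + (3 / 4) * (deriv (fun y => A y 0 1) x / A x 0 1) ^ 2
    - deriv (deriv fun y => A y 0 1) x / (2 * A x 0 1)

theorem operPotential_eq_logDeriv [NeZero (2 : 𝕜)] {A : 𝕜 → Matrix (Fin 2) (Fin 2) 𝕜}
    {x : 𝕜} (hA : DifferentiableAt 𝕜 (fun y => A y 0 1) x) (hAx : A x 0 1 ≠ 0)
    (hL : DifferentiableAt 𝕜 (logDeriv fun y => A y 0 1) x) :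
    operPotential A x =
      -(A x).det + (deriv (fun y => A y 0 0) x - A x 0 0 * logDeriv (fun y => A y 0 1) x)
        + (logDeriv (fun y => A y 0 1) x ^ 2 / 4 - deriv (logDeriv fun y => A y 0 1) x / 2) := by
  have second_deriv : deriv (deriv fun y => A y 0 1) x / (2 * A x 0 1) =
      (logDeriv (fun y => A y 0 1) x ^ 2 + deriv (logDeriv fun y => A y 0 1) x) / 2 := by
    rw [← deriv_deriv_div_self_eq_logDeriv_sq_add hA hAx hL, div_div, mul_comm]
  have four_eq : (4 : 𝕜) = 2 * 2 := by norm_num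
  rw [operPotential, second_deriv, mul_div_assoc, ← logDeriv_apply (fun y => A y 0 1), four_eq]
  field_simp
  ring

end OperPotential

section PainleveIII

/-- The connection matrix of the Painlevé III₃ pencil at parameter `ε`. The zero `q` of its upper
right entry is the apparent singularity of the associated oper. -/
def painleveIII₃Connection (ε t r q p x : 𝕜) : Matrix (Fin 2) (Fin 2) 𝕜 :=
  !![(r + p * q / ε) / x, (x - q) / (ε * x ^ 2);
     (t * x - q⁻¹) / (ε * x), -((r + p * q / ε) / x)]

variable {ε t H r q p x : 𝕜}

theorem neg_det_painleveIII₃Connection (hε : ε ≠ 0) (hq : q ≠ 0)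
    (hspec : p ^ 2 * q ^ 2 = t * q + H + q⁻¹) (hx : x ≠ 0) :
    -(painleveIII₃Connection ε t r q p x).det =
      ε⁻¹ ^ 2 * (t / x + H / x ^ 2 + 1 / x ^ 3) + ε⁻¹ * (2 * p * q * r / x ^ 2)
        + r ^ 2 / x ^ 2 := by
  obtain rfl : H = p ^ 2 * q ^ 2 - t * q - q⁻¹ := by rw [hspec]; ring
  rw [painleveIII₃Connection, Matrix.det_fin_two_of]
  field_simp
  ring

theorem deriv_const_div_sub_mul_eq (c : 𝕜) (hx : x ≠ 0) (hxq : x ≠ q) :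
    deriv (fun y => c / y) x - c / x * (1 / (x - q) - 2 / x) = -(c * q) / (x ^ 2 * (x - q)) := by
  have hxq' : x - q ≠ 0 := sub_ne_zero.mpr hxq
  simp only [div_eq_mul_inv c, deriv_const_mul_field, deriv_inv]
  field_simp
  ring

theorem one_div_sub_two_div_sq_div_four_sub [NeZero (2 : 𝕜)] (hx : x ≠ 0) (hxq : x ≠ q) :
    (1 / (x - q) - 2 / x) ^ 2 / 4 - (2 / x ^ 2 - 1 / (x - q) ^ 2) / 2 =
      3 / (4 * (x - q) ^ 2) - 1 / (x * (x - q)) := by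
  have hxq' : x - q ≠ 0 := sub_ne_zero.mpr hxq
  have four_eq : (4 : 𝕜) = 2 * 2 := by norm_num
  rw [four_eq]
  field_simp
  ring

theorem operPotential_painleveIII₃Connection [NeZero (2 : 𝕜)]
    (hε : ε ≠ 0) (hx : x ≠ 0) (hxq : x ≠ q) :
    operPotential (painleveIII₃Connection ε t r q p) x =
      -(painleveIII₃Connection ε t r q p x).det
        + -((r + p * q / ε) * q) / (x ^ 2 * (x - q))
        + (3 / (4 * (x - q) ^ 2) - 1 / (x * (x - q))) := by
  have hden : ε * x ^ 2 ≠ 0 := mul_ne_zero hε (pow_ne_zero 2 hx)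
  have hentry : (fun y => painleveIII₃Connection ε t r q p y 0 1) =
      fun y => (y - q) / (ε * y ^ 2) := rfl
  have hL := logDeriv_sub_const_div_const_mul_pow 2 hε hx hxq
  have hL' := hasDerivAt_logDeriv_sub_const_div_const_mul_pow 2 hε hx hxq
  rw [Nat.cast_ofNat, ← hentry] at hL hL'
  rw [operPotential_eq_logDeriv (by rw [hentry]; fun_prop (disch := exact hden))
      (div_ne_zero (sub_ne_zero.mpr hxq) hden) hL'.differentiableAt, hL, hL'.deriv,
    one_div_sub_two_div_sq_div_four_sub hx hxq,
    ← deriv_const_div_sub_mul_eq (r + p * q / ε) hx hxq]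
  rfl

theorem stmt8_general [NeZero (2 : 𝕜)] (hε : ε ≠ 0) (hq : q ≠ 0)
    (hspec : p ^ 2 * q ^ 2 = t * q + H + q⁻¹) (hx : x ≠ 0) (hxq : x ≠ q) :
    operPotential (painleveIII₃Connection ε t r q p) x =
      ε⁻¹ ^ 2 * (t / x + H / x ^ 2 + 1 / x ^ 3)
        + ε⁻¹ * (-(p * q ^ 2) / (x ^ 2 * (x - q)) + 2 * p * q * r / x ^ 2)
        + (3 / (4 * (x - q) ^ 2) - (x + r * q) / (x ^ 2 * (x - q)) + r ^ 2 / x ^ 2) := by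
  have split_simple_pole : -((r + p * q / ε) * q) / (x ^ 2 * (x - q)) - 1 / (x * (x - q)) =
      ε⁻¹ * (-(p * q ^ 2) / (x ^ 2 * (x - q))) - (x + r * q) / (x ^ 2 * (x - q)) := by
    have hxq' : x - q ≠ 0 := sub_ne_zero.mpr hxq
    field_simp
    ring
  rw [operPotential_painleveIII₃Connection hε hx hxq,
    neg_det_painleveIII₃Connection hε hq hspec hx]
  linear_combination split_simple_pole

end PainleveIII

/- Painlevé III₃: the oper potential of the gauge-transformed connection equals
   ε⁻²Q₀(x) + ε⁻¹Q₁(x) + Q₂(x). -/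
theorem stmt8
    (ε : ℂ) (hε : ε ≠ 0) (t : ℂ) (ht : t ≠ 0) (H r q p : ℂ)
    (hq : q ≠ 0) (hspec : p ^ 2 * q ^ 2 = t * q + H + q⁻¹)
    (A : ℂ → Matrix (Fin 2) (Fin 2) ℂ)
    (hA : ∀ x : ℂ, A x =
      !![(r + p * q / ε) / x, (x - q) / (ε * x ^ 2);
         (t * x - q⁻¹) / (ε * x), -((r + p * q / ε) / x)]) :
    ∀ x : ℂ, x ≠ 0 → x ≠ q →
      -(A x).det + deriv (fun y => (r + p * q / ε) / y) x
        - ((r + p * q / ε) / x) * deriv (fun y => (y - q) / (ε * y ^ 2)) x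
            / ((x - q) / (ε * x ^ 2))
        + (3 / 4) * (deriv (fun y => (y - q) / (ε * y ^ 2)) x
            / ((x - q) / (ε * x ^ 2))) ^ 2
        - deriv (deriv (fun y => (y - q) / (ε * y ^ 2))) x
            / (2 * ((x - q) / (ε * x ^ 2)))
      = ε⁻¹ ^ 2 * (t / x + H / x ^ 2 + 1 / x ^ 3)
        + ε⁻¹ * (-(p * q ^ 2) / (x ^ 2 * (x - q)) + 2 * p * q * r / x ^ 2)
        + (3 / (4 * (x - q) ^ 2) - (x + r * q) / (x ^ 2 * (x - q)) + r ^ 2 / x ^ 2) := by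
  intro x hx hxq
  obtain rfl : A = painleveIII₃Connection ε t r q p := funext hA
  exact stmt8_general hε hq hspec hx hxq
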